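/- arXiv:2111.05254 — 3 statements merged into one kernel-verified Lean document; each statement's English description precedes it below -/
import Mathlib

section
/- Divergence of a boosted growing Fourier mode inside the causal wedge (core of Theorem 2). Let Γ > 0, 0 < v < 1, and γ = (1 − v²)^{-1/2}. Let P : ℝ × ℝ → ℝ be doubly periodic, i.e. there exist T₀ > 0 and L > 0 with P(t + T₀, x) = P(t, x) and P(t, x + L) = P(t, x) for all (t,x), and assume P is not identically zero. Then the function φ(t,x) := P(t,x) · exp(Γ·γ·(t − v·x)) is unbounded on the wedge D = {(t,x) ∈ ℝ² : 0 ≤ t ∧ t < x}; that is, for every M > 0 there exists (t,x) ∈ D with |φ(t,x)| > M. -/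
/-- **Divergence of a boosted growing Fourier mode inside the causal wedge
(core of Theorem 2).** If P is doubly periodic and not identically zero, Γ > 0,
0 < v < 1 and γ = (1 − v²)^{-1/2}, then φ(t,x) = P(t,x)·exp(Γγ(t − vx)) is
unbounded on the wedge D = {(t,x) : 0 ≤ t ∧ t < x}. -/
theorem boosted_growing_mode_unbounded_on_wedge
    (Γ v γ : ℝ) (hΓ : 0 < Γ) (hv0 : 0 < v) (hv1 : v < 1)
    (hγ : γ = 1 / Real.sqrt (1 - v ^ 2))
    (P : ℝ → ℝ → ℝ) (T₀ L : ℝ) (hT₀ : 0 < T₀) (hL : 0 < L)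
    (hPt : ∀ t x : ℝ, P (t + T₀) x = P t x)
    (hPx : ∀ t x : ℝ, P t (x + L) = P t x)
    (hP : ∃ t x : ℝ, P t x ≠ 0) :
    ∀ M : ℝ, 0 < M → ∃ t x : ℝ, 0 ≤ t ∧ t < x ∧
      M < |P t x * Real.exp (Γ * γ * (t - v * x))| := by
  intro M hM
  obtain ⟨t0, x0, hp⟩ := hP
  have hg : 0 < γ := by
    rw [hγ]
    have : 0 < 1 - v ^ 2 := by nlinarith
    positivity
  have hk : 0 < Γ * γ := mul_pos hΓ hg
  have hp' : 0 < |P t0 x0| := abs_pos.mpr hp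
  have hv : 0 < 1 - v := by linarith
  have hB : 0 ≤ (M / |P t0 x0| / (Γ * γ) + v * L) / (1 - v) := by positivity
  obtain ⟨n, hn, -⟩ := existsUnique_add_zsmul_mem_Ioc hT₀ t0
    ((M / |P t0 x0| / (Γ * γ) + v * L) / (1 - v))
  obtain ⟨m, hm, -⟩ := existsUnique_add_zsmul_mem_Ioc hL x0 (t0 + n • T₀)
  have h1 : P (t0 + n • T₀) (x0 + m • L) = P t0 x0 := by
    have e1 := (show Function.Periodic (P (t0 + n • T₀)) L from hPx _).zsmul m x0
    have e2 := (show Function.Periodic (fun t => P t x0) T₀ from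
      fun t => hPt t x0).zsmul n t0
    exact e1.trans e2
  refine ⟨t0 + n • T₀, x0 + m • L, hB.trans hn.1.le, hm.1, ?_⟩
  rw [h1, abs_mul, Real.abs_exp]
  have hn1 := hn.1
  have hm2 := hm.2
  generalize t0 + n • T₀ = t at *
  generalize x0 + m • L = x at *
  rw [div_lt_iff₀ hv] at hn1
  have h2 : M / |P t0 x0| / (Γ * γ) < t - v * x := by nlinarith
  rw [div_lt_iff₀ hk] at h2
  have h3 := Real.add_one_le_exp (Γ * γ * (t - v * x))
  have h4 : M / |P t0 x0| < Real.exp (Γ * γ * (t - v * x)) := by linarith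
  rw [div_lt_iff₀ hp'] at h4
  linarith
end

section
/- Boosted spatially homogeneous mode of the telegraph equation. Let D > 0, w > 0, let v ∈ ℝ with 0 < |v| < 1 and v²·w² ≠ 1, let γ = (1 − v²)^{-1/2}, and let Γ ∈ ℝ. The function T : ℝ² → ℝ, T(t,x) := exp(Γ·γ·(t − v·x)), satisfies the telegraph equation (1/w²)·∂_t² T + (1/D)·∂_t T = ∂_x² T at every point of ℝ² if and only if Γ = 0 or Γ = w² / (D·γ·(v²·w² − 1)). Moreover the nonzero root satisfies Γ > 0 if and only if v²·w² > 1 (i.e., the boosted telegraph equation has a growing spatially homogeneous mode exactly when the characteristic speed w is superluminal and the boost velocity exceeds 1/w). -/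
/-- **Boosted spatially homogeneous mode of the telegraph equation.** The function
T(t,x) = exp(Γγ(t − vx)) (a zero-wavenumber Fourier mode in the boosted frame)
solves the telegraph equation (1/w²)∂_t²T + (1/D)∂_tT = ∂_x²T everywhere if and
only if Γ = 0 or Γ = w²/(Dγ(v²w² − 1)); and the nonzero root is positive exactly
when v²w² > 1. -/
theorem boosted_telegraph_mode
    (D w v γ Γ : ℝ) (hD : 0 < D) (hw : 0 < w) (hv0 : 0 < |v|) (hv1 : |v| < 1)
    (hvw : v ^ 2 * w ^ 2 ≠ 1)
    (hγ : γ = 1 / Real.sqrt (1 - v ^ 2))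
    (T : ℝ → ℝ → ℝ)
    (hT : T = fun t x => Real.exp (Γ * γ * (t - v * x))) :
    ((∀ t x : ℝ,
        (1 / w ^ 2) * deriv (fun s => deriv (fun s' => T s' x) s) t
            + (1 / D) * deriv (fun s => T s x) t
          = deriv (fun y => deriv (fun y' => T t y') y) x)
      ↔ (Γ = 0 ∨ Γ = w ^ 2 / (D * γ * (v ^ 2 * w ^ 2 - 1))))
    ∧ (0 < w ^ 2 / (D * γ * (v ^ 2 * w ^ 2 - 1)) ↔ 1 < v ^ 2 * w ^ 2) := by
  have hsq : v ^ 2 < 1 := by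
    rw [← sq_abs]; nlinarith [abs_nonneg v]
  have hg : 0 < γ := by
    rw [hγ]
    have : 0 < Real.sqrt (1 - v ^ 2) := Real.sqrt_pos.mpr (by linarith)
    positivity
  have hne : v ^ 2 * w ^ 2 - 1 ≠ 0 := sub_ne_zero.mpr hvw
  have key : ∀ a b s : ℝ, HasDerivAt (fun r => Real.exp (a * r + b))
      (a * Real.exp (a * s + b)) s := by
    intro a b s
    have h := (((hasDerivAt_id s).const_mul a).add_const b).exp
    simp only [id, mul_one] at h
    rw [mul_comm]
    exact h
  have d1 : ∀ a b : ℝ, deriv (fun r => Real.exp (a * r + b))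
      = fun s => a * Real.exp (a * s + b) := fun a b => funext fun s => (key a b s).deriv
  have d2 : ∀ a b s : ℝ, deriv (fun r => a * Real.exp (a * r + b)) s
      = a * (a * Real.exp (a * s + b)) := fun a b s => ((key a b s).const_mul a).deriv
  have ht : ∀ x : ℝ, (fun s => T s x)
      = fun s => Real.exp (Γ * γ * s + (-(Γ * γ * v * x))) := by
    intro x; subst hT; funext s; simp only; congr 1; ring
  have hx : ∀ t : ℝ, (fun y => T t y)
      = fun y => Real.exp (-(Γ * γ * v) * y + Γ * γ * t) := by
    intro t; subst hT; funext s; simp only; congr 1; ring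
  constructor
  · have hE : ∀ t x : ℝ, ((1 / w ^ 2) * deriv (fun s => deriv (fun s' => T s' x) s) t
            + (1 / D) * deriv (fun s => T s x) t
          = deriv (fun y => deriv (fun y' => T t y') y) x) ↔
          Γ * (Γ * (D * γ * (v ^ 2 * w ^ 2 - 1)) - w ^ 2) = 0 := by
      intro t x
      rw [ht x, hx t]
      simp only [d1, d2]
      have e : -(Γ * γ * v) * x + Γ * γ * t = Γ * γ * t + (-(Γ * γ * v * x)) := by ring
      rw [e]
      have hp := Real.exp_pos (Γ * γ * t + (-(Γ * γ * v * x)))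
      generalize Real.exp (Γ * γ * t + (-(Γ * γ * v * x))) = E at hp
      rw [← sub_eq_zero]
      have f : 1 / w ^ 2 * (Γ * γ * (Γ * γ * E)) + 1 / D * (Γ * γ * E)
          - -(Γ * γ * v) * (-(Γ * γ * v) * E)
          = -(γ * E / (w ^ 2 * D)) * (Γ * (Γ * (D * γ * (v ^ 2 * w ^ 2 - 1)) - w ^ 2)) := by
        field_simp
        ring
      have hc : -(γ * E / (w ^ 2 * D)) ≠ 0 := neg_ne_zero.mpr (by positivity)
      rw [f, mul_eq_zero, or_iff_right hc]
    simp only [hE, forall_const]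
    rw [mul_eq_zero, sub_eq_zero, eq_div_iff (by positivity)]
  · rw [div_pos_iff_of_pos_left (by positivity), mul_pos_iff_of_pos_left (by positivity), sub_pos]
end

section
/- Blow-up of the boosted heat-kernel as t → 0⁻ (Section IV.A, figure 6): the boosted heat equation anti-diffuses. Let D > 0, 0 < v < 1, γ = (1 − v²)^{-1/2}, and define F : ℝ² → ℝ by F(t,x) := (4π·D·γ·(t + v·x))^{-1/2} · exp(−γ·(x + v·t)² / (4·D·(t + v·x))) when t + v·x > 0, and F(t,x) := 0 when t + v·x ≤ 0. Then for every M > 0 there exists δ > 0 such that for every t ∈ (−δ, 0) there exists x ∈ ℝ with F(t,x) > M; that is, the supremum over x of F(t, x) tends to +∞ as t tends to 0 from below. -/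
/-- **Blow-up of the boosted heat-kernel as t → 0⁻** (Section IV.A, figure 6):
the boosted heat equation anti-diffuses. The boosted retarded Green's function
F (extended by zero to t + vx ≤ 0) has sup_x F(t,x) → +∞ as t → 0⁻: for every
M > 0 there is δ > 0 such that for every t ∈ (−δ, 0) some x has F(t,x) > M. -/
theorem boosted_heat_kernel_blowup
    (D v γ : ℝ) (hD : 0 < D) (hv0 : 0 < v) (hv1 : v < 1)
    (hγ : γ = 1 / Real.sqrt (1 - v ^ 2))
    (F : ℝ → ℝ → ℝ)
    (hF : ∀ t x : ℝ, F t x =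
      if 0 < t + v * x then
        (1 / Real.sqrt (4 * Real.pi * D * γ * (t + v * x)))
          * Real.exp (-(γ * (x + v * t) ^ 2) / (4 * D * (t + v * x)))
      else 0) :
    ∀ M : ℝ, 0 < M → ∃ δ : ℝ, 0 < δ ∧
      ∀ t ∈ Set.Ioo (-δ) (0 : ℝ), ∃ x : ℝ, M < F t x := by
  have hs : 0 < 1 - v ^ 2 := by nlinarith
  have hγ0 : 0 < γ := by rw [hγ]; positivity
  clear hγ
  intro M hM
  obtain ⟨C, hC⟩ : ∃ C, C = 4 * Real.pi * D * γ := ⟨_, rfl⟩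
  obtain ⟨K, hK⟩ : ∃ K, K = γ * (2 / v - v) ^ 2 / (4 * D) := ⟨_, rfl⟩
  have hC0 : 0 < C := by rw [hC]; have := Real.pi_pos; positivity
  have hK0 : 0 ≤ K := by rw [hK]; positivity
  have hE : 0 < M * Real.exp K := by positivity
  refine ⟨min 1 ((1 / (M * Real.exp K)) ^ 2 / C), by positivity, ?_⟩
  rintro t ⟨ht1, ht0⟩
  have h1 : -t < 1 := lt_of_lt_of_le (by linarith) (min_le_left _ ((1 / (M * Real.exp K)) ^ 2 / C))
  have h2 : -t < (1 / (M * Real.exp K)) ^ 2 / C :=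
    lt_of_lt_of_le (by linarith) (min_le_right 1 _)
  refine ⟨2 * (-t) / v, ?_⟩
  have e1 : t + v * (2 * (-t) / v) = -t := by field_simp; ring
  have e2 : -(γ * (2 * (-t) / v + v * t) ^ 2) / (4 * D * (-t)) = -(K * (-t)) := by
    rw [hK]
    have : t ≠ 0 := ht0.ne
    field_simp
    ring
  rw [hF, e1, if_pos (by linarith), e2, ← hC]
  have h3 : Real.sqrt (C * (-t)) < 1 / (M * Real.exp K) := by
    rw [Real.sqrt_lt' (by positivity)]
    rw [lt_div_iff₀ hC0] at h2
    linarith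
  have hpos : 0 < Real.sqrt (C * (-t)) := Real.sqrt_pos.mpr (mul_pos hC0 (by linarith))
  have h4 : M * Real.exp K < 1 / Real.sqrt (C * (-t)) := by
    rw [lt_div_iff₀ hE] at h3
    rw [lt_div_iff₀ hpos]
    linarith
  have h5 : Real.exp (-K) ≤ Real.exp (-(K * (-t))) := by
    apply Real.exp_le_exp.mpr
    nlinarith
  calc M = M * Real.exp K * Real.exp (-K) := by
        rw [mul_assoc, ← Real.exp_add]; simp
    _ < 1 / Real.sqrt (C * (-t)) * Real.exp (-K) :=
        mul_lt_mul_of_pos_right h4 (Real.exp_pos _)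
    _ ≤ _ := mul_le_mul_of_nonneg_left h5 (by positivity)
end
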